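/- arXiv:1903.04335 — 2 statements merged into one kernel-verified Lean document; each statement's English description precedes it below -/
import Mathlib

section
/- Let −1 ≤ a < b ≤ 1 and let C(x) = Σ_{m=0}^M c_m T_m(x) be a real polynomial of degree at most M written in the basis of Chebyshev polynomials of the first kind T_m. Set α = (1/2)·exp(i·(arccos(a) + arccos(b))/2) and β = cos((arccos(a) − arccos(b))/2). Then C(x) ≥ 0 for all x ∈ [a,b] if and only if there exist Hermitian positive semidefinite matrices Q ∈ ℂ^{(M+1)×(M+1)} (rows/columns indexed by 0,…,M) and R ∈ ℂ^{M×M} (indexed by 0,…,M−1) such that, for every m = 0,…,M, Σ_{i−j=m} Q_{i,j} + α·Σ_{i−j=m−1} R_{i,j} − β·Σ_{i−j=m} R_{i,j} + conj(α)·Σ_{i−j=m+1} R_{i,j} equals c_m/2 when m ≥ 1 and equals c_0 when m = 0 (all sums run over admissible index pairs (i,j) with the indicated difference i − j). -/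
open scoped ComplexOrder
/-- Feasibility of the semidefinite certificate for nonnegativity of a polynomial
`∑ m, r m • T m` on `[a,b]`, with data `α ∈ ℂ`, `β ∈ ℝ`:
there exist PSD matrices `Q ∈ ℂ^{(M+1)×(M+1)}` and `R ∈ ℂ^{M×M}` such that for all
`m = 0,…,M`,
`∑_{i-j=m} Q_{ij} + α ∑_{i-j=m-1} R_{ij} - β ∑_{i-j=m} R_{ij} + conj(α) ∑_{i-j=m+1} R_{ij}`
equals `r 0` if `m = 0` and `r m / 2` if `m ≥ 1`. -/
def SdpCert (M : ℕ) (α : ℂ) (β : ℝ) (r : Fin (M + 1) → ℝ) : Prop :=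
  ∃ (Q : Matrix (Fin (M + 1)) (Fin (M + 1)) ℂ) (R : Matrix (Fin M) (Fin M) ℂ),
    Q.PosSemidef ∧ R.PosSemidef ∧
    ∀ m : Fin (M + 1),
      (∑ p ∈ Finset.univ.filter
          (fun p : Fin (M + 1) × Fin (M + 1) => ((p.1 : ℕ) : ℤ) - ((p.2 : ℕ) : ℤ) = (m : ℕ)),
          Q p.1 p.2)
        + α * (∑ p ∈ Finset.univ.filter
            (fun p : Fin M × Fin M => ((p.1 : ℕ) : ℤ) - ((p.2 : ℕ) : ℤ) = ((m : ℕ) : ℤ) - 1),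
            R p.1 p.2)
        - (β : ℂ) * (∑ p ∈ Finset.univ.filter
            (fun p : Fin M × Fin M => ((p.1 : ℕ) : ℤ) - ((p.2 : ℕ) : ℤ) = (m : ℕ)),
            R p.1 p.2)
        + (starRingEnd ℂ) α * (∑ p ∈ Finset.univ.filter
            (fun p : Fin M × Fin M => ((p.1 : ℕ) : ℤ) - ((p.2 : ℕ) : ℤ) = ((m : ℕ) : ℤ) + 1),
            R p.1 p.2)
      = if m = 0 then ((r m : ℝ) : ℂ) else ((r m : ℝ) : ℂ) / 2

/-!
Substitute `x = re z` with `z` on the unit circle. Then `[a, b]` becomes the arc on which the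
trigonometric polynomial `w z = 2 * re (α z) - β` is nonnegative, and comparing coefficients of
Laurent polynomials turns the certificate into an identity `C (re z) = q z + w z * r z`, where `q`
and `r` are the nonnegative trigonometric polynomials with Gram matrices `Q` and `R`.

Such an identity forces `C ≥ 0` on `[a, b]`. Conversely, the functions
`∑ ‖f i‖ ^ 2 + w * ∑ ‖g j‖ ^ 2` with `deg f i ≤ n` and `deg g j < n` are closed under products, the
degrees adding up: `w ^ 2 = ‖z * w‖ ^ 2` on the circle, and `z * w` is a polynomial of degree at
most `2`. A real polynomial nonnegative on `[a, b]` is a product of nonnegative constants,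
quadratics `(X - u) ^ 2 + v ^ 2`, and affine factors `X - r` with `r ≤ a` or `r - X` with `b ≤ r`,
so it suffices to represent these. For the affine ones this is an explicit trigonometric identity.
-/

open Set Polynomial
open AddMonoidAlgebra (single)
open scoped ComplexConjugate LaurentPolynomial Matrix

section PositiveFactors

variable {a b : ℝ}

/-- The building blocks of the real polynomials that are nonnegative on `[a, b]`: nonnegative
constants, affine factors vanishing outside `(a, b)`, and quadratics nonnegative on `ℝ`. -/
inductive IsPositiveFactor (a b : ℝ) : ℝ[X] → Prop
  | const {c : ℝ} (hc : 0 ≤ c) : IsPositiveFactor a b (C c)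
  | left {r : ℝ} (hr : r ≤ a) : IsPositiveFactor a b (X - C r)
  | right {r : ℝ} (hr : b ≤ r) : IsPositiveFactor a b (C r - X)
  | quadratic (u v : ℝ) : IsPositiveFactor a b ((X - C u) ^ 2 + C (v ^ 2))

lemma IsPositiveFactor.eval_nonneg {f : ℝ[X]} (hf : IsPositiveFactor a b f) {x : ℝ}
    (hx : x ∈ Icc a b) : 0 ≤ f.eval x := by
  cases hf with
  | const hc => simpa using hc
  | left hr => simpa using hr.trans hx.1
  | right hr => simpa using hx.2.trans hr
  | quadratic u v =>
    simp only [eval_add, eval_pow, eval_sub, eval_X, eval_C]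
    positivity

lemma eval_nonneg_of_mul_left (hab : a < b) {f q : ℝ[X]} (hf₀ : f ≠ 0)
    (hf : ∀ x ∈ Icc a b, 0 ≤ f.eval x) (hfq : ∀ x ∈ Icc a b, 0 ≤ (f * q).eval x) :
    ∀ x ∈ Icc a b, 0 ≤ q.eval x := by
  have hroots : Dense {x | f.IsRoot x}ᶜ := (finite_setOfPred_isRoot hf₀).countable.dense_compl ℝ
  have hsub : Icc a b ⊆ closure (Ioo a b ∩ {x | f.IsRoot x}ᶜ) := by
    rw [← closure_Ioo hab.ne]
    exact closure_minimal (hroots.open_subset_closure_inter isOpen_Ioo) isClosed_closure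
  refine hsub.trans (closure_minimal ?_ (isClosed_Ici.preimage q.continuous))
  rintro x ⟨hx, hroot⟩
  have hpos : 0 < f.eval x := (hf x (Ioo_subset_Icc_self hx)).lt_of_ne' hroot
  refine nonneg_of_mul_nonneg_right ?_ hpos
  simpa using hfq x (Ioo_subset_Icc_self hx)

lemma sq_X_sub_C_dvd_of_isLocalExtr {p : ℝ[X]} {r : ℝ} (hroot : p.IsRoot r)
    (hr : IsLocalExtr (fun x => p.eval x) r) : (X - C r) ^ 2 ∣ p := by
  rcases eq_or_ne p 0 with rfl | hp₀
  · exact dvd_zero _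
  have hderiv : (derivative p).IsRoot r := by
    rw [IsRoot.def, ← p.deriv]
    exact hr.deriv_eq_zero
  exact (le_rootMultiplicity_iff hp₀).1 <|
    (one_lt_rootMultiplicity_iff_isRoot hp₀).2 ⟨hroot, hderiv⟩

lemma exists_isPositiveFactor_dvd_of_isRoot {p : ℝ[X]} {r : ℝ} (hroot : p.IsRoot r)
    (hp : ∀ x ∈ Icc a b, 0 ≤ p.eval x) :
    ∃ f, IsPositiveFactor a b f ∧ f.natDegree ≠ 0 ∧ f ∣ p := by
  have hdvd : X - C r ∣ p := dvd_iff_isRoot.2 hroot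
  rcases le_or_gt r a with hra | har
  · exact ⟨X - C r, .left hra, by simp, hdvd⟩
  rcases le_or_gt b r with hbr | hrb
  · refine ⟨C r - X, .right hbr, ?_, by rwa [← neg_dvd, neg_sub]⟩
    rw [← natDegree_neg, neg_sub]
    simp
  · have hmin : IsLocalMin (fun x => p.eval x) r := by
      filter_upwards [Icc_mem_nhds har hrb] with x hx
      simpa only [hroot.eq_zero] using hp x hx
    refine ⟨(X - C r) ^ 2 + C (0 ^ 2), .quadratic r 0, by simp, ?_⟩
    simpa using sq_X_sub_C_dvd_of_isLocalExtr hroot (.inl hmin)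

lemma exists_isPositiveFactor_dvd_of_aeval_eq_zero {p : ℝ[X]} {z : ℂ} (hz : aeval z p = 0)
    (him : z.im ≠ 0) : ∃ f, IsPositiveFactor a b f ∧ f.natDegree ≠ 0 ∧ f ∣ p := by
  refine ⟨_, .quadratic z.re z.im, by rw [natDegree_add_C]; simp, ?_⟩
  convert quadratic_dvd_of_aeval_eq_zero_im_ne_zero p hz him using 1
  rw [← Complex.normSq_eq_norm_sq, Complex.normSq_apply]
  simp only [map_mul, map_add, map_pow, map_ofNat]
  ring

lemma exists_isPositiveFactor_dvd {p : ℝ[X]} (hdeg : p.natDegree ≠ 0)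
    (hp : ∀ x ∈ Icc a b, 0 ≤ p.eval x) :
    ∃ f, IsPositiveFactor a b f ∧ f.natDegree ≠ 0 ∧ f ∣ p := by
  obtain ⟨z, hz⟩ := IsAlgClosed.exists_aeval_eq_zero ℂ p fun h =>
    hdeg (natDegree_eq_of_degree_eq_some h)
  by_cases him : z.im = 0
  · refine exists_isPositiveFactor_dvd_of_isRoot (r := z.re) ?_ hp
    rw [← Complex.conj_eq_iff_im, Complex.conj_eq_iff_re] at him
    rw [← him] at hz
    exact (aeval_algebraMap_eq_zero_iff ℂ z.re p).1 hz
  · exact exists_isPositiveFactor_dvd_of_aeval_eq_zero hz him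

theorem mem_closure_isPositiveFactor_of_nonneg (hab : a < b) {p : ℝ[X]}
    (hp : ∀ x ∈ Icc a b, 0 ≤ p.eval x) : p ∈ Submonoid.closure {f | IsPositiveFactor a b f} := by
  induction hn : p.natDegree using Nat.strong_induction_on generalizing p with
  | _ n ih =>
  rcases eq_or_ne p.natDegree 0 with hdeg | hdeg
  · obtain ⟨c, rfl⟩ := natDegree_eq_zero.1 hdeg
    exact Submonoid.subset_closure (.const (by simpa using hp a (left_mem_Icc.2 hab.le)))
  obtain ⟨f, hf, hfdeg, q, rfl⟩ := exists_isPositiveFactor_dvd hdeg hp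
  have hfq : f * q ≠ 0 := ne_zero_of_natDegree_gt (Nat.pos_of_ne_zero hdeg)
  have hf₀ : f ≠ 0 := left_ne_zero_of_mul hfq
  have hlt : q.natDegree < n := by
    rw [← hn, natDegree_mul hf₀ (right_ne_zero_of_mul hfq)]
    omega
  exact mul_mem (Submonoid.subset_closure hf) <|
    ih _ hlt (eval_nonneg_of_mul_left hab hf₀ (fun _ => hf.eval_nonneg) hp) rfl

end PositiveFactors

section LaurentPolynomials

/-- Evaluation of a Laurent polynomial at a point of the unit circle. -/
noncomputable def circleEval (z : Circle) : ℂ[T;T⁻¹] →+* ℂ :=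
  LaurentPolynomial.eval₂ (RingHom.id ℂ) (Circle.toUnits z)

@[simp]
lemma circleEval_single (z : Circle) (k : ℤ) (x : ℂ) :
    circleEval z (single k x) = x * (z : ℂ) ^ k := by
  simp [circleEval, LaurentPolynomial.single_eq_C_mul_T]

@[simp]
lemma circleEval_toLaurent (z : Circle) (p : ℂ[X]) : circleEval z p.toLaurent = p.eval (z : ℂ) := by
  simp [circleEval, eval₂_id]

lemma re_circleExp (θ : ℝ) : (Circle.exp θ : ℂ).re = Real.cos θ := by
  rw [Circle.coe_exp, Complex.exp_ofReal_mul_I_re]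

lemma infinite_circle : Infinite Circle :=
  have : Nontrivial Circle := ⟨-1, 1, Circle.neg_ne_self 1⟩
  PreconnectedSpace.infinite

lemma forall_circleEval_eq_iff {f g : ℂ[T;T⁻¹]} :
    (∀ z, circleEval z f = circleEval z g) ↔ f = g := by
  refine ⟨fun h => ?_, fun h z => by rw [h]⟩
  obtain ⟨n, p, hp⟩ := (f - g).exists_T_pow
  have hroot (z : Circle) : p.IsRoot z := by
    rw [IsRoot.def, ← circleEval_toLaurent, hp, map_mul, map_sub, h, sub_self, zero_mul]
  have hp₀ : p = 0 := by
    have := infinite_circle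
    refine eq_zero_of_infinite_isRoot p (Set.Infinite.mono ?_
      (infinite_range_of_injective (α := Circle) Circle.coe_injective))
    exact range_subset_iff.2 hroot
  rw [hp₀, map_zero, eq_comm, (LaurentPolynomial.isUnit_T (n : ℤ)).mul_left_eq_zero] at hp
  exact sub_eq_zero.1 hp

/-- A Laurent polynomial `f` with `f* = f`, i.e. one that is real on the unit circle. -/
def IsHermitianLaurent (f : ℂ[T;T⁻¹]) : Prop :=
  ∀ m : ℤ, f.coeff (-m) = conj (f.coeff m)

namespace IsHermitianLaurent

variable {f g : ℂ[T;T⁻¹]}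

lemma add (hf : IsHermitianLaurent f) (hg : IsHermitianLaurent g) :
    IsHermitianLaurent (f + g) := fun m => by
  simp [hf m, hg m]

lemma ext_natCast (hf : IsHermitianLaurent f) (hg : IsHermitianLaurent g)
    (h : ∀ m : ℕ, f.coeff m = g.coeff m) : f = g := by
  refine LaurentPolynomial.ext fun m => ?_
  obtain ⟨k, rfl | rfl⟩ := m.eq_nat_or_neg
  · exact h k
  · rw [hf, hg, h]

end IsHermitianLaurent

end LaurentPolynomials

section GramMatrices

/-- The Laurent polynomial `∑ i j, Q i j z ^ (i - j)`, whose `m`-th coefficient is the sum of `Q`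
along its `m`-th subdiagonal. -/
noncomputable def gramLaurent {n : ℕ} (Q : Matrix (Fin n) (Fin n) ℂ) : ℂ[T;T⁻¹] :=
  ∑ p : Fin n × Fin n, single (((p.1 : ℕ) : ℤ) - ((p.2 : ℕ) : ℤ)) (Q p.1 p.2)

variable {n : ℕ} (Q R : Matrix (Fin n) (Fin n) ℂ)

@[simp]
lemma gramLaurent_zero : gramLaurent (0 : Matrix (Fin n) (Fin n) ℂ) = 0 := by
  simp [gramLaurent]

@[simp]
lemma gramLaurent_add : gramLaurent (Q + R) = gramLaurent Q + gramLaurent R := by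
  simp [gramLaurent, Finset.sum_add_distrib]

lemma coeff_gramLaurent (m : ℤ) :
    (gramLaurent Q).coeff m =
      ∑ p : Fin n × Fin n with ((p.1 : ℕ) : ℤ) - ((p.2 : ℕ) : ℤ) = m, Q p.1 p.2 := by
  simp only [gramLaurent, AddMonoidAlgebra.coeff_sum, AddMonoidAlgebra.coeff_single,
    Finsupp.finsetSum_apply, Finsupp.single_apply, Finset.sum_filter]

lemma coeff_gramLaurent_of_le {m : ℤ} (hm : n ≤ m) : (gramLaurent Q).coeff m = 0 := by
  rw [coeff_gramLaurent, Finset.filter_false_of_mem, Finset.sum_empty]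
  omega

variable {Q} in
lemma isHermitianLaurent_gramLaurent (hQ : Q.IsHermitian) :
    IsHermitianLaurent (gramLaurent Q) := by
  intro m
  simp only [coeff_gramLaurent, map_sum]
  refine Finset.sum_equiv (Equiv.prodComm _ _) (fun p => ?_) fun p _ => (hQ.apply _ _).symm
  simp only [Finset.mem_filter_univ, Equiv.prodComm_apply, Prod.fst_swap, Prod.snd_swap]
  omega

lemma circleEval_gramLaurent (z : Circle) :
    circleEval z (gramLaurent Q) =
      star (fun i : Fin n => conj (z : ℂ) ^ (i : ℕ)) ⬝ᵥ
        Q *ᵥ fun i : Fin n => conj (z : ℂ) ^ (i : ℕ) := by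
  simp only [gramLaurent, map_sum, circleEval_single, dotProduct, Matrix.mulVec, Finset.mul_sum,
    Fintype.sum_prod_type]
  refine Finset.sum_congr rfl fun i _ => Finset.sum_congr rfl fun j _ => ?_
  rw [zpow_sub₀ z.coe_ne_zero, zpow_natCast, zpow_natCast, Pi.star_apply, star_pow,
    RCLike.star_def, Complex.conj_conj, ← Circle.coe_inv_eq_conj, Circle.coe_inv, inv_pow,
    div_eq_mul_inv, mul_left_comm]

variable {Q} in
lemma circleEval_gramLaurent_nonneg (hQ : Q.PosSemidef) (z : Circle) :
    0 ≤ circleEval z (gramLaurent Q) := by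
  rw [circleEval_gramLaurent]
  exact hQ.dotProduct_mulVec_nonneg _

lemma exists_posSemidef_circleEval_gramLaurent_eq_normSq {f : ℂ[X]} (hf : f.natDegree < n) :
    ∃ Q : Matrix (Fin n) (Fin n) ℂ, Q.PosSemidef ∧
      ∀ z : Circle, circleEval z (gramLaurent Q) = Complex.normSq (f.eval (z : ℂ)) := by
  refine ⟨Matrix.vecMulVec (fun i => f.coeff i) (star fun i => f.coeff i),
    Matrix.posSemidef_vecMulVec_self_star _, fun z => ?_⟩
  have heval : (star fun i : Fin n => conj (z : ℂ) ^ (i : ℕ)) ⬝ᵥ (fun i => f.coeff i) =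
      f.eval (z : ℂ) := by
    simp [eval_eq_sum_range' hf, Finset.sum_range, dotProduct, mul_comm]
  have heval_conj : (star fun i : Fin n => f.coeff i) ⬝ᵥ (fun i : Fin n => conj (z : ℂ) ^ (i : ℕ)) =
      conj (f.eval (z : ℂ)) := by
    rw [Matrix.star_dotProduct, heval, RCLike.star_def]
  rw [circleEval_gramLaurent, Matrix.vecMulVec_mulVec, dotProduct_smul, heval, heval_conj,
    op_smul_eq_mul, Complex.mul_conj]

end GramMatrices

section ArcWeight

variable {α : ℂ} {β : ℝ}

/-- The Laurent polynomial `α z - β + conj α z⁻¹`. -/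
noncomputable def arcLaurent (α : ℂ) (β : ℝ) : ℂ[T;T⁻¹] :=
  single 1 α - single 0 (β : ℂ) + single (-1) (conj α)

/-- The values of `arcLaurent α β` on the unit circle. For `α = exp (φ * I) / 2` and `β = cos δ`
with `0 ≤ δ ≤ π` they are nonnegative exactly on the arc of the points `exp (-θ * I)` with
`|θ - φ| ≤ δ`. -/
def arcWeight (α : ℂ) (β : ℝ) (z : Circle) : ℝ := 2 * (α * (z : ℂ)).re - β

@[simp]
lemma circleEval_arcLaurent (z : Circle) : circleEval z (arcLaurent α β) = arcWeight α β z := by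
  have hre : ((2 * (α * (z : ℂ)).re : ℝ) : ℂ) = α * z + conj α * (z : ℂ)⁻¹ := by
    rw [← Complex.add_conj, map_mul, ← Circle.coe_inv_eq_conj, Circle.coe_inv]
  rw [arcWeight, Complex.ofReal_sub, hre]
  simp only [arcLaurent, map_add, map_sub, circleEval_single, zpow_one, zpow_zero, zpow_neg_one]
  ring

lemma coeff_arcLaurent_mul (f : ℂ[T;T⁻¹]) (m : ℤ) :
    (arcLaurent α β * f).coeff m =
      α * f.coeff (m - 1) - β * f.coeff m + conj α * f.coeff (m + 1) := by
  simp only [arcLaurent, add_mul, sub_mul, AddMonoidAlgebra.coeff_add, AddMonoidAlgebra.coeff_sub,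
    Finsupp.add_apply, Finsupp.sub_apply, AddMonoidAlgebra.coeff_single_mul_apply]
  ring_nf

lemma IsHermitianLaurent.arcLaurent_mul {f : ℂ[T;T⁻¹]} (hf : IsHermitianLaurent f) :
    IsHermitianLaurent (arcLaurent α β * f) := fun m => by
  have hsub : f.coeff (-m - 1) = conj (f.coeff (m + 1)) := by rw [← hf, neg_add']
  have hadd : f.coeff (-m + 1) = conj (f.coeff (m - 1)) := by rw [← hf, neg_sub, neg_add_eq_sub]
  simp only [coeff_arcLaurent_mul, hsub, hadd, hf m, map_add, map_sub, map_mul, Complex.conj_conj,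
    Complex.conj_ofReal]
  ring

end ArcWeight

section GramCertificates

variable {M : ℕ} {α : ℂ} {β : ℝ} {g : Circle → ℝ}

/-- The function-level form of `SdpCert`: `g` is a positive semidefinite trigonometric polynomial
of degree at most `M`, plus the arc weight times one of degree less than `M`. -/
def HasGramCert (M : ℕ) (α : ℂ) (β : ℝ) (g : Circle → ℝ) : Prop :=
  ∃ (Q : Matrix (Fin (M + 1)) (Fin (M + 1)) ℂ) (R : Matrix (Fin M) (Fin M) ℂ),
    Q.PosSemidef ∧ R.PosSemidef ∧
      ∀ z, (g z : ℂ) = circleEval z (gramLaurent Q + arcLaurent α β * gramLaurent R)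

lemma HasGramCert.nonneg (hg : HasGramCert M α β g) {z : Circle} (hz : 0 ≤ arcWeight α β z) :
    0 ≤ g z := by
  obtain ⟨Q, R, hQ, hR, h⟩ := hg
  have hweight : (0 : ℂ) ≤ arcWeight α β z := Complex.zero_le_real.2 hz
  rw [← Complex.zero_le_real, h, map_add, map_mul, circleEval_arcLaurent]
  exact add_nonneg (circleEval_gramLaurent_nonneg hQ z)
    (mul_nonneg hweight (circleEval_gramLaurent_nonneg hR z))

end GramCertificates

section ArcCone

variable {α : ℂ} {β : ℝ} {m n : ℕ} {g h : Circle → ℝ}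

/-- The squares `‖f‖ ^ 2` with `f` of degree at most `n`, and the weighted squares
`arcWeight α β * ‖f‖ ^ 2` with `f` of degree less than `n`, as functions on the unit circle. -/
inductive IsArcSquare (α : ℂ) (β : ℝ) (n : ℕ) : (Circle → ℝ) → Prop
  | sq {f : ℂ[X]} (hf : f.natDegree ≤ n) :
      IsArcSquare α β n fun z => Complex.normSq (f.eval (z : ℂ))
  | weighted {f : ℂ[X]} (hf : f.natDegree < n) :
      IsArcSquare α β n fun z => arcWeight α β z * Complex.normSq (f.eval (z : ℂ))

lemma IsArcSquare.mono (hmn : m ≤ n) (hg : IsArcSquare α β m g) : IsArcSquare α β n g := by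
  cases hg with
  | sq hf => exact .sq (hf.trans hmn)
  | weighted hf => exact .weighted (hf.trans_le hmn)

lemma exists_natDegree_le_normSq_eq_arcWeight_sq (α : ℂ) (β : ℝ) :
    ∃ f : ℂ[X], f.natDegree ≤ 2 ∧
      ∀ z : Circle, Complex.normSq (f.eval (z : ℂ)) = arcWeight α β z ^ 2 := by
  refine ⟨C α * X ^ 2 - C (β : ℂ) * X + C (conj α), by compute_degree, fun z => ?_⟩
  have heval : (C α * X ^ 2 - C (β : ℂ) * X + C (conj α)).eval (z : ℂ) =
      (z : ℂ) * (arcWeight α β z : ℂ) := by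
    rw [← circleEval_arcLaurent]
    simp only [arcLaurent, map_add, map_sub, circleEval_single, zpow_one, zpow_zero, zpow_neg_one,
      eval_add, eval_sub, eval_mul, eval_C, eval_pow, eval_X]
    field_simp [z.coe_ne_zero]
  rw [heval, Complex.normSq_mul, Circle.normSq_coe, one_mul, Complex.normSq_ofReal, sq]

lemma IsArcSquare.mul (hg : IsArcSquare α β m g) (hh : IsArcSquare α β n h) :
    IsArcSquare α β (m + n) (g * h) := by
  rcases hg with @⟨p, hp⟩ | @⟨p, hp⟩ <;> rcases hh with @⟨q, hq⟩ | @⟨q, hq⟩ <;>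
    have hpq := natDegree_mul_le (p := p) (q := q)
  · convert IsArcSquare.sq (f := p * q) (n := m + n) (by omega) using 1
    ext z
    simp
  · convert IsArcSquare.weighted (f := p * q) (n := m + n) (by omega) using 1
    ext z
    simp only [Pi.mul_apply, eval_mul, map_mul]
    ring
  · convert IsArcSquare.weighted (f := p * q) (n := m + n) (by omega) using 1
    ext z
    simp only [Pi.mul_apply, eval_mul, map_mul]
    ring
  · obtain ⟨w, hw, hwz⟩ := exists_natDegree_le_normSq_eq_arcWeight_sq α β
    have hdeg : (w * (p * q)).natDegree ≤ m + n := natDegree_mul_le.trans (by omega)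
    convert IsArcSquare.sq hdeg using 1
    ext z
    simp only [Pi.mul_apply, eval_mul, map_mul, hwz]
    ring

/-- The cone of sums of squares and weighted squares of degree `n`: the truncated quadratic module
of the arc on which `arcWeight α β` is nonnegative. -/
def arcCone (α : ℂ) (β : ℝ) (n : ℕ) : AddSubmonoid (Circle → ℝ) :=
  AddSubmonoid.closure {g | IsArcSquare α β n g}

lemma arcCone_mono (hmn : m ≤ n) : arcCone α β m ≤ arcCone α β n :=
  AddSubmonoid.closure_mono fun _ => IsArcSquare.mono hmn

lemma mul_mem_arcCone (hg : g ∈ arcCone α β m) (hh : h ∈ arcCone α β n) :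
    g * h ∈ arcCone α β (m + n) := by
  have hmem := AddSubmonoid.mul_mem_mul hg hh
  rw [arcCone, arcCone, AddSubmonoid.closure_mul_closure] at hmem
  refine AddSubmonoid.closure_mono ?_ hmem
  rintro _ ⟨g, hg, h, hh, rfl⟩
  exact hg.mul hh

lemma normSq_eval_mem_arcCone {f : ℂ[X]} (hf : f.natDegree ≤ n) :
    (fun z : Circle => Complex.normSq (f.eval (z : ℂ))) ∈ arcCone α β n :=
  AddSubmonoid.subset_closure (.sq hf)

lemma arcWeight_mem_arcCone : arcWeight α β ∈ arcCone α β 1 :=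
  AddSubmonoid.subset_closure <| by
    simpa using IsArcSquare.weighted (α := α) (β := β) (f := 1) (n := 1) (by simp)

lemma const_mem_arcCone {c : ℝ} (hc : 0 ≤ c) : (fun _ => c) ∈ arcCone α β n := by
  convert normSq_eval_mem_arcCone (f := C ((√c : ℝ) : ℂ)) (by simp) using 2
  simp [Complex.normSq_ofReal, Real.mul_self_sqrt hc]

lemma const_mul_mem_arcCone {c : ℝ} (hc : 0 ≤ c) (hg : g ∈ arcCone α β n) :
    (fun z => c * g z) ∈ arcCone α β n :=
  zero_add n ▸ mul_mem_arcCone (const_mem_arcCone hc) hg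

lemma sq_re_sub_mem_arcCone (u : ℝ) :
    (fun z : Circle => ((z : ℂ).re - u) ^ 2) ∈ arcCone α β 2 := by
  obtain ⟨f, hf, hfz⟩ := exists_natDegree_le_normSq_eq_arcWeight_sq (1 / 2) u
  convert normSq_eval_mem_arcCone hf using 2 with z
  simp [hfz, arcWeight]

lemma hasGramCert_of_mem_arcCone (hg : g ∈ arcCone α β n) : HasGramCert n α β g := by
  induction hg using AddSubmonoid.closure_induction with
  | mem g hg =>
    cases hg with
    | sq hf =>
      obtain ⟨Q, hQ, hQz⟩ :=
        exists_posSemidef_circleEval_gramLaurent_eq_normSq (Nat.lt_succ_of_le hf)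
      exact ⟨Q, 0, hQ, .zero, fun z => by simp [hQz]⟩
    | weighted hf =>
      obtain ⟨R, hR, hRz⟩ := exists_posSemidef_circleEval_gramLaurent_eq_normSq hf
      exact ⟨0, R, .zero, hR, fun z => by simp [hRz]⟩
  | zero => exact ⟨0, 0, .zero, .zero, fun z => by simp⟩
  | add g h _ _ hg hh =>
    obtain ⟨Q₁, R₁, hQ₁, hR₁, h₁⟩ := hg
    obtain ⟨Q₂, R₂, hQ₂, hR₂, h₂⟩ := hh
    refine ⟨Q₁ + Q₂, R₁ + R₂, hQ₁.add hQ₂, hR₁.add hR₂, fun z => ?_⟩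
    rw [Pi.add_apply, Complex.ofReal_add, h₁, h₂, ← map_add, gramLaurent_add, gramLaurent_add]
    congr 1
    ring

end ArcCone

section Arc

variable {φ δ : ℝ} {p : ℝ[X]}

/-- The parameter `α = exp (φ * I) / 2` of the arc centred at `exp (-φ * I)`. -/
noncomputable def arcCoeff (φ : ℝ) : ℂ := 1 / 2 * Complex.exp (Complex.I * φ)

lemma arcWeight_arcCoeff_exp (φ β θ : ℝ) :
    arcWeight (arcCoeff φ) β (Circle.exp θ) = Real.cos (θ + φ) - β := by
  have hmul : arcCoeff φ * Circle.exp θ = (1 / 2 : ℝ) * Complex.exp ((θ + φ : ℝ) * Complex.I) := by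
    rw [arcCoeff, Circle.coe_exp, mul_assoc, ← Complex.exp_add]
    push_cast
    ring_nf
  rw [arcWeight, hmul, Complex.re_ofReal_mul, Complex.exp_ofReal_mul_I_re]
  ring

lemma arcWeight_arcCoeff_exp_neg_nonneg {θ : ℝ} (hδ : δ ≤ Real.pi) (hθ : |θ - φ| ≤ δ) :
    0 ≤ arcWeight (arcCoeff φ) (Real.cos δ) (Circle.exp (-θ)) := by
  rw [arcWeight_arcCoeff_exp, sub_nonneg, neg_add_eq_sub, ← Real.cos_abs (φ - θ), abs_sub_comm]
  exact Real.cos_le_cos_of_nonneg_of_le_pi (abs_nonneg _) hδ hθ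

lemma normSq_exp_mul_sub_one (t θ : ℝ) :
    Complex.normSq (Circle.exp t * Circle.exp θ - 1) = 2 * (1 - Real.cos (θ + t)) := by
  rw [← Circle.coe_mul, ← Circle.exp_add, add_comm, Complex.normSq_sub, Circle.normSq_coe,
    Complex.normSq_one, map_one, mul_one, re_circleExp]
  ring

lemma sin_mul_re_sub_cos_mem_arcCone {t : ℝ} (hφ : 0 ≤ Real.sin φ) (ht : 0 ≤ Real.sin t) :
    (fun z : Circle => Real.sin (t - φ) * ((z : ℂ).re - Real.cos t)) ∈
      arcCone (arcCoeff φ) (Real.cos (t - φ)) 1 := by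
  -- With `z = exp (θ * I)`, the representation is
  -- `sin (t - φ) (cos θ - cos t) = sin t (cos (θ + φ) - cos (t - φ)) + sin φ (1 - cos (θ + t))`.
  have hdeg : (C (Circle.exp t : ℂ) * X - 1 : ℂ[X]).natDegree ≤ 1 := by compute_degree
  convert add_mem (const_mul_mem_arcCone ht arcWeight_mem_arcCone)
    (const_mul_mem_arcCone (half_pos one_pos).le
      (const_mul_mem_arcCone hφ (normSq_eval_mem_arcCone hdeg))) using 1
  ext z
  obtain ⟨θ, rfl⟩ : ∃ θ, Circle.exp θ = z := ⟨_, Circle.exp_arg z⟩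
  simp only [Pi.add_apply, arcWeight_arcCoeff_exp, eval_sub, eval_mul, eval_C, eval_X, eval_one,
    normSq_exp_mul_sub_one, re_circleExp, Real.cos_add, Real.cos_sub, Real.sin_sub]
  linear_combination Real.sin φ * Real.sin_sq_add_cos_sq t

lemma re_sub_cos_mem_arcCone (hδ : 0 < Real.sin δ) (hφ : 0 ≤ Real.sin φ)
    (hadd : 0 ≤ Real.sin (φ + δ)) :
    (fun z : Circle => (z : ℂ).re - Real.cos (φ + δ)) ∈ arcCone (arcCoeff φ) (Real.cos δ) 1 := by
  have hmem := sin_mul_re_sub_cos_mem_arcCone hφ hadd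
  rw [add_sub_cancel_left] at hmem
  simpa [hδ.ne'] using const_mul_mem_arcCone (inv_nonneg.2 hδ.le) hmem

lemma cos_sub_re_mem_arcCone (hδ : 0 < Real.sin δ) (hφ : 0 ≤ Real.sin φ)
    (hsub : 0 ≤ Real.sin (φ - δ)) :
    (fun z : Circle => Real.cos (φ - δ) - (z : ℂ).re) ∈ arcCone (arcCoeff φ) (Real.cos δ) 1 := by
  have hmem := sin_mul_re_sub_cos_mem_arcCone hφ hsub
  rw [sub_sub_cancel_left, Real.sin_neg, Real.cos_neg] at hmem
  simpa [hδ.ne'] using const_mul_mem_arcCone (inv_nonneg.2 hδ.le) hmem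

lemma IsPositiveFactor.eval_re_mem_arcCone (hδ : 0 < Real.sin δ) (hφ : 0 ≤ Real.sin φ)
    (hadd : 0 ≤ Real.sin (φ + δ)) (hsub : 0 ≤ Real.sin (φ - δ))
    (hp : IsPositiveFactor (Real.cos (φ + δ)) (Real.cos (φ - δ)) p) :
    (fun z : Circle => p.eval (z : ℂ).re) ∈ arcCone (arcCoeff φ) (Real.cos δ) p.natDegree := by
  cases hp with
  | const hc => simpa using const_mem_arcCone hc
  | @left r hr =>
    rw [natDegree_X_sub_C]
    convert add_mem (re_sub_cos_mem_arcCone hδ hφ hadd) (const_mem_arcCone (sub_nonneg.2 hr))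
      using 1
    ext z
    simp
  | @right r hr =>
    rw [← natDegree_neg, neg_sub, natDegree_X_sub_C]
    convert add_mem (cos_sub_re_mem_arcCone hδ hφ hsub) (const_mem_arcCone (sub_nonneg.2 hr))
      using 1
    ext z
    simp
  | quadratic u v =>
    rw [natDegree_add_C, natDegree_pow, natDegree_X_sub_C]
    convert add_mem (sq_re_sub_mem_arcCone u) (const_mem_arcCone (sq_nonneg v)) using 1
    ext z
    simp

lemma eval_re_mem_arcCone_of_mem_closure (hδ : 0 < Real.sin δ) (hφ : 0 ≤ Real.sin φ)
    (hadd : 0 ≤ Real.sin (φ + δ)) (hsub : 0 ≤ Real.sin (φ - δ))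
    (hp : p ∈ Submonoid.closure {f | IsPositiveFactor (Real.cos (φ + δ)) (Real.cos (φ - δ)) f}) :
    (fun z : Circle => p.eval (z : ℂ).re) ∈ arcCone (arcCoeff φ) (Real.cos δ) p.natDegree := by
  induction hp using Submonoid.closure_induction with
  | mem f hf => exact hf.eval_re_mem_arcCone hδ hφ hadd hsub
  | one => simpa using const_mem_arcCone zero_le_one
  | mul p q _ _ hp hq =>
    rcases eq_or_ne (p * q) 0 with hpq | hpq
    · simpa only [hpq, eval_zero] using const_mem_arcCone le_rfl
    · rw [natDegree_mul (left_ne_zero_of_mul hpq) (right_ne_zero_of_mul hpq)]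
      simp only [eval_mul]
      exact mul_mem_arcCone hp hq

theorem HasGramCert.eval_nonneg {M : ℕ}
    (hp : HasGramCert M (arcCoeff φ) (Real.cos δ) fun z => p.eval (z : ℂ).re)
    (hδ : 0 ≤ δ) (hsub : 0 ≤ φ - δ) (hadd : φ + δ ≤ Real.pi) {x : ℝ}
    (hx : x ∈ Icc (Real.cos (φ + δ)) (Real.cos (φ - δ))) : 0 ≤ p.eval x := by
  set θ := Real.arccos x
  have hcos : Real.cos θ = x :=
    Real.cos_arccos ((Real.neg_one_le_cos _).trans hx.1) (hx.2.trans (Real.cos_le_one _))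
  have hupper : θ ≤ φ + δ := by
    rw [← Real.arccos_cos (x := φ + δ) (by linarith) hadd]
    exact Real.antitone_arccos hx.1
  have hlower : φ - δ ≤ θ := by
    rw [← Real.arccos_cos (x := φ - δ) hsub (by linarith)]
    exact Real.antitone_arccos hx.2
  have hweight : 0 ≤ arcWeight (arcCoeff φ) (Real.cos δ) (Circle.exp (-θ)) :=
    arcWeight_arcCoeff_exp_neg_nonneg (by linarith) (abs_le.2 ⟨by linarith, by linarith⟩)
  simpa only [re_circleExp, Real.cos_neg, hcos] using hp.nonneg hweight

theorem hasGramCert_of_eval_nonneg {M : ℕ} (hδ : 0 < δ) (hsub : 0 ≤ φ - δ)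
    (hadd : φ + δ ≤ Real.pi) (hdeg : p.natDegree ≤ M)
    (hp : ∀ x ∈ Icc (Real.cos (φ + δ)) (Real.cos (φ - δ)), 0 ≤ p.eval x) :
    HasGramCert M (arcCoeff φ) (Real.cos δ) fun z => p.eval (z : ℂ).re := by
  have hsin {t : ℝ} (h₀ : 0 ≤ t) (hπ : t ≤ Real.pi) : 0 ≤ Real.sin t :=
    Real.sin_nonneg_of_nonneg_of_le_pi h₀ hπ
  have hδ' : 0 < Real.sin δ := Real.sin_pos_of_pos_of_lt_pi hδ (by linarith)
  have hcos : Real.cos (φ + δ) < Real.cos (φ - δ) :=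
    Real.cos_lt_cos_of_nonneg_of_le_pi hsub hadd (by linarith)
  exact hasGramCert_of_mem_arcCone <| arcCone_mono hdeg <|
    eval_re_mem_arcCone_of_mem_closure hδ' (hsin (by linarith) (by linarith))
      (hsin (by linarith) hadd) (hsin hsub (by linarith))
      (mem_closure_isPositiveFactor_of_nonneg hcos hp)

end Arc

section ChebyshevSeries

variable {M : ℕ} (c : Fin (M + 1) → ℝ)

/-- The polynomial with Chebyshev coefficients `c`. -/
noncomputable def chebyshevSeries : ℝ[X] :=
  ∑ m : Fin (M + 1), C (c m) * Chebyshev.T ℝ ((m : ℕ) : ℤ)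

lemma natDegree_chebyshevSeries_le : (chebyshevSeries c).natDegree ≤ M := by
  refine natDegree_sum_le_of_forall_le _ _ fun m _ => (natDegree_C_mul_le _ _).trans ?_
  rw [Chebyshev.natDegree_T, Int.natAbs_natCast]
  exact m.is_le

/-- The Laurent polynomial `∑ m, c m (z ^ m + z ^ (-m)) / 2`. -/
noncomputable def chebyshevLaurent : ℂ[T;T⁻¹] :=
  ∑ m : Fin (M + 1),
    (single ((m : ℕ) : ℤ) ((c m : ℂ) / 2) + single (-((m : ℕ) : ℤ)) ((c m : ℂ) / 2))

lemma circleEval_chebyshevLaurent (z : Circle) :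
    circleEval z (chebyshevLaurent c) = ((chebyshevSeries c).eval (z : ℂ).re : ℝ) := by
  obtain ⟨θ, rfl⟩ : ∃ θ, Circle.exp θ = z := ⟨_, Circle.exp_arg z⟩
  rw [re_circleExp, chebyshevLaurent, chebyshevSeries, map_sum, eval_finsetSum,
    Complex.ofReal_sum]
  refine Finset.sum_congr rfl fun m _ => ?_
  rw [map_add, circleEval_single, circleEval_single, eval_mul, eval_C, Chebyshev.T_real_cos,
    Circle.coe_exp, ← Complex.exp_int_mul, ← Complex.exp_int_mul]
  push_cast
  rw [Complex.cos]
  ring_nf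

lemma coeff_chebyshevLaurent (k : ℤ) :
    (chebyshevLaurent c).coeff k = ∑ m : Fin (M + 1),
      ((if ((m : ℕ) : ℤ) = k then (c m : ℂ) / 2 else 0) +
        if -((m : ℕ) : ℤ) = k then (c m : ℂ) / 2 else 0) := by
  simp only [chebyshevLaurent, AddMonoidAlgebra.coeff_sum, AddMonoidAlgebra.coeff_add,
    AddMonoidAlgebra.coeff_single, Finsupp.finsetSum_apply, Finsupp.add_apply,
    Finsupp.single_apply]

lemma coeff_chebyshevLaurent_fin (m : Fin (M + 1)) :
    (chebyshevLaurent c).coeff (m : ℕ) = if m = 0 then (c m : ℂ) else (c m : ℂ) / 2 := by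
  have hpos (k : Fin (M + 1)) : ((k : ℕ) : ℤ) = (m : ℕ) ↔ k = m := by omega
  have hneg (k : Fin (M + 1)) : -((k : ℕ) : ℤ) = (m : ℕ) ↔ k = m ∧ m = 0 := by
    simp only [Fin.ext_iff, Fin.val_zero]
    omega
  simp only [coeff_chebyshevLaurent, hpos, hneg, Finset.sum_add_distrib]
  by_cases hm : m = 0 <;> simp [hm]

lemma coeff_chebyshevLaurent_of_lt {k : ℤ} (hk : M < k) : (chebyshevLaurent c).coeff k = 0 := by
  rw [coeff_chebyshevLaurent]
  refine Finset.sum_eq_zero fun m _ => ?_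
  rw [if_neg (by omega), if_neg (by omega), add_zero]

lemma isHermitianLaurent_chebyshevLaurent : IsHermitianLaurent (chebyshevLaurent c) := fun k => by
  have hiff (m : ℤ) : m = -k ↔ -m = k := by omega
  simp only [coeff_chebyshevLaurent, hiff, neg_neg, map_sum, map_add, apply_ite conj, map_zero,
    map_div₀, Complex.conj_ofReal, map_ofNat]
  exact Finset.sum_congr rfl fun m _ => add_comm _ _

variable {c}

lemma chebyshevLaurent_eq_iff {f : ℂ[T;T⁻¹]} (hf : IsHermitianLaurent f)
    (hdeg : ∀ m : ℤ, M < m → f.coeff m = 0) :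
    chebyshevLaurent c = f ↔
      ∀ m : Fin (M + 1), f.coeff (m : ℕ) = if m = 0 then (c m : ℂ) else (c m : ℂ) / 2 := by
  simp_rw [← coeff_chebyshevLaurent_fin]
  refine ⟨fun h m => by rw [h], fun h => ?_⟩
  refine (isHermitianLaurent_chebyshevLaurent c).ext_natCast hf fun m => ?_
  rcases lt_or_ge M m with hm | hm
  · rw [coeff_chebyshevLaurent_of_lt c (by omega), hdeg m (by omega)]
  · exact (h ⟨m, by omega⟩).symm

lemma sdpCert_iff_hasGramCert {α : ℂ} {β : ℝ} :
    SdpCert M α β c ↔ HasGramCert M α β fun z => (chebyshevSeries c).eval (z : ℂ).re := by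
  refine exists_congr fun Q => exists_congr fun R => and_congr_right fun hQ =>
    and_congr_right fun hR => ?_
  have hherm : IsHermitianLaurent (gramLaurent Q + arcLaurent α β * gramLaurent R) :=
    (isHermitianLaurent_gramLaurent hQ.isHermitian).add
      (isHermitianLaurent_gramLaurent hR.isHermitian).arcLaurent_mul
  have hdeg (m : ℤ) (hm : M < m) :
      (gramLaurent Q + arcLaurent α β * gramLaurent R).coeff m = 0 := by
    rw [AddMonoidAlgebra.coeff_add, Finsupp.add_apply, coeff_arcLaurent_mul,
      coeff_gramLaurent_of_le Q (by omega), coeff_gramLaurent_of_le R (by omega),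
      coeff_gramLaurent_of_le R (by omega), coeff_gramLaurent_of_le R (by omega)]
    ring
  simp_rw [← circleEval_chebyshevLaurent]
  rw [forall_circleEval_eq_iff, chebyshevLaurent_eq_iff hherm hdeg]
  simp only [AddMonoidAlgebra.coeff_add, Finsupp.add_apply, coeff_arcLaurent_mul,
    coeff_gramLaurent, ← add_assoc, add_sub_assoc]

end ChebyshevSeries

/-- A polynomial `C = ∑_{m=0}^M c_m T_m` (Chebyshev expansion) is nonnegative on
`[a,b] ⊆ [-1,1]` iff the semidefinite certificate with
`α = (1/2) exp(i (arccos a + arccos b)/2)` and `β = cos((arccos a − arccos b)/2)` exists. -/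
theorem chebyshev_nonneg_iff_sdpCert
    (a b : ℝ) (ha : -1 ≤ a) (hab : a < b) (hb : b ≤ 1)
    (M : ℕ) (c : Fin (M + 1) → ℝ) (Cpoly : Polynomial ℝ)
    (hC : Cpoly = ∑ m : Fin (M + 1),
      Polynomial.C (c m) * Polynomial.Chebyshev.T ℝ ((m : ℕ) : ℤ))
    (α : ℂ)
    (hα : α = (1 / 2) * Complex.exp (Complex.I *
      (((Real.arccos a + Real.arccos b) / 2 : ℝ) : ℂ)))
    (β : ℝ) (hβ : β = Real.cos ((Real.arccos a - Real.arccos b) / 2)) :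
    (∀ x ∈ Set.Icc a b, 0 ≤ Cpoly.eval x) ↔ SdpCert M α β c := by
  have ha' : Real.cos (Real.arccos a) = a := Real.cos_arccos ha (hab.le.trans hb)
  have hb' : Real.cos (Real.arccos b) = b := Real.cos_arccos (ha.trans hab.le) hb
  have hlt : Real.arccos b < Real.arccos a := Real.arccos_lt_arccos ha hab hb
  set φ := (Real.arccos a + Real.arccos b) / 2
  set δ := (Real.arccos a - Real.arccos b) / 2
  have hadd : φ + δ = Real.arccos a := by ring
  have hsub : φ - δ = Real.arccos b := by ring
  have hδ : 0 < δ := half_pos (sub_pos.2 hlt)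
  have hφδ : 0 ≤ φ - δ := hsub ▸ Real.arccos_nonneg b
  have hφδ' : φ + δ ≤ Real.pi := hadd ▸ Real.arccos_le_pi a
  obtain rfl : α = arcCoeff φ := hα
  obtain rfl : Cpoly = chebyshevSeries c := hC
  rw [sdpCert_iff_hasGramCert, hβ, ← ha', ← hb', ← hadd, ← hsub]
  exact ⟨hasGramCert_of_eval_nonneg hδ hφδ hφδ' (natDegree_chebyshevSeries_le c),
    fun h x => h.eval_nonneg hδ.le hφδ hφδ'⟩
end

section
/- Let y = (y_k)_{k≥0} be a sequence of real numbers. There exists a finite nonnegative Borel measure μ on [0, π] such that ∫_0^π cos(kθ) dμ(θ) = y_k for all k ≥ 0 if and only if for every d ≥ 0 the (d+1)×(d+1) symmetric Toeplitz matrix Toep_d(y) with entries (Toep_d(y))_{i,j} = y_{|i−j|} is positive semidefinite. -/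
open MeasureTheory

/-- The `(d+1) × (d+1)` symmetric Toeplitz matrix built from a sequence `y`,
with entries `y_{|i−j|}`. -/
noncomputable def toepN (d : ℕ) (y : ℕ → ℝ) : Matrix (Fin (d + 1)) (Fin (d + 1)) ℝ :=
  fun i j => y (((i : ℕ) : ℤ) - ((j : ℕ) : ℤ)).natAbs

open Matrix Filter Topology Real
open scoped ComplexOrder NNReal BoundedContinuousFunction

/-!
The Toeplitz matrix `C(t)` of the sequence `cos (k t)` is the sum of two rank-one squares, hence
positive semidefinite. If `y` is the moment sequence of `μ`, then `Toep_d(y) = ∫ C(t) ∂μ` is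
positive semidefinite as well. Conversely, by the Schur product theorem the sum of the entries of
`Toep_n(y) ⊙ C(t)` is nonnegative, and up to normalization this sum is the `n`-th Fejér mean of the
cosine series with coefficients `y`. By orthogonality of cosines, the measures on `[0, π]` having
these densities have `k`-th moment `(1 - k / (n + 1)) y k` for `k ≤ n`; they all have mass `y 0`, so
they have a weak cluster point, whose moments are the limits `y k`.
-/

section PosSemidef

variable {ι 𝕜 Ω : Type*} [RCLike 𝕜]

lemma posSemidef_integral [MeasurableSpace Ω] {μ : Measure Ω} {A : Ω → Matrix ι ι 𝕜}
    (hA : ∀ᵐ ω ∂μ, (A ω).PosSemidef) (hint : ∀ i j, Integrable (fun ω ↦ A ω i j) μ) :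
    (of fun i j ↦ ∫ ω, A ω i j ∂μ).PosSemidef := by
  refine ⟨?_, fun x ↦ ?_⟩
  · ext i j
    rw [conjTranspose_apply, of_apply, of_apply, ← starRingEnd_apply, ← integral_conj]
    exact integral_congr_ae (hA.mono fun ω hω ↦ hω.isHermitian.apply i j)
  · have hterm : ∀ i j, Integrable (fun ω ↦ star (x i) * A ω i j * x j) μ := fun i j ↦
      ((hint i j).const_mul _).mul_const _
    calc (0 : 𝕜) ≤ ∫ ω, x.sum fun i xi ↦ x.sum fun j xj ↦ star xi * A ω i j * xj ∂μ :=
          integral_nonneg_of_ae (hA.mono fun ω hω ↦ hω.2 x)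
      _ = x.sum fun i xi ↦ x.sum fun j xj ↦ star xi * (∫ ω, A ω i j ∂μ) * xj := by
          simp only [Finsupp.sum]
          rw [integral_finsetSum _ fun i _ ↦ integrable_finsetSum _ fun j _ ↦ hterm i j]
          refine Finset.sum_congr rfl fun i _ ↦ ?_
          rw [integral_finsetSum _ fun j _ ↦ hterm i j]
          simp only [integral_mul_const, integral_const_mul]

lemma sum_hadamard_nonneg [Fintype ι] {A B : Matrix ι ι 𝕜} (hA : A.PosSemidef)
    (hB : B.PosSemidef) : 0 ≤ ∑ i, ∑ j, A i j * B i j := by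
  simpa [dotProduct, mulVec] using (hA.hadamard hB).dotProduct_mulVec_nonneg 1

end PosSemidef

section WeakLimit

variable {E ι α : Type*} [MeasurableSpace E] [TopologicalSpace E] [T2Space E] [BorelSpace E]

lemma exists_finiteMeasure_integral_eq_of_tendsto {K : Set E} (hK : IsCompact K) {C : ℝ≥0}
    {l : Filter α} [NeBot l] {ν : α → FiniteMeasure E} (hmass : ∀ a, (ν a).mass ≤ C)
    (hsupp : ∀ a, ν a Kᶜ = 0) {f : ι → E →ᵇ ℝ} {c : ι → ℝ}
    (hlim : ∀ i, Tendsto (fun a ↦ ∫ x, f i x ∂(ν a : Measure E)) l (𝓝 (c i))) :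
    ∃ μ : FiniteMeasure E, μ Kᶜ = 0 ∧ ∀ i, ∫ x, f i x ∂(μ : Measure E) = c i := by
  obtain ⟨μ, ⟨-, hμK⟩, hμ⟩ :=
    (isCompact_setOfPred_finiteMeasure_le_of_isCompact C hK).exists_mapClusterPt_of_frequently
      (Frequently.of_forall (f := l) fun a ↦ ⟨hmass a, hsupp a⟩)
  refine ⟨μ, hμK, fun i ↦ ?_⟩
  have hcluster : MapClusterPt (∫ x, f i x ∂(μ : Measure E)) l
      fun a ↦ ∫ x, f i x ∂(ν a : Measure E) :=
    hμ.continuousAt_comp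
      (FiniteMeasure.continuous_integral_boundedContinuousFunction (f i)).continuousAt
  exact eq_of_nhds_neBot (hcluster.neBot.mono (inf_le_inf_left _ (hlim i)))

end WeakLimit

section Cosine

/-- The function `t ↦ cos (a t)` as a bounded continuous function, so that it can be tested against
weak limits of measures. -/
noncomputable def cosMulBCF (a : ℝ) : ℝ →ᵇ ℝ :=
  .ofNormedAddCommGroup (fun t ↦ cos (a * t)) (by fun_prop) 1 fun t ↦ abs_cos_le_one (a * t)

lemma integral_cos_int_mul (m : ℤ) :
    ∫ t in (0 : ℝ)..π, cos (m * t) = if m = 0 then π else 0 := by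
  split_ifs with hm
  · simp [hm]
  · rw [intervalIntegral.integral_comp_mul_left cos (Int.cast_ne_zero.mpr hm), integral_cos]
    simp [sin_int_mul_pi]

lemma integral_cos_int_mul_mul_cos_int_mul (m k : ℤ) :
    ∫ t in (0 : ℝ)..π, cos (m * t) * cos (k * t) =
      π / 2 * ((if m = k then 1 else 0) + if m = -k then 1 else 0) := by
  have hprod (t : ℝ) : cos (m * t) * cos (k * t) =
      (cos (((m - k : ℤ) : ℝ) * t) + cos (((m + k : ℤ) : ℝ) * t)) / 2 := by
    push_cast
    rw [sub_mul, add_mul, cos_sub, cos_add]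
    ring
  have hint (a : ℝ) : IntervalIntegrable (fun t ↦ cos (a * t)) volume 0 π :=
    (by fun_prop : Continuous fun t ↦ cos (a * t)).intervalIntegrable _ _
  simp only [hprod]
  rw [intervalIntegral.integral_div, intervalIntegral.integral_add (hint _) (hint _),
    integral_cos_int_mul, integral_cos_int_mul]
  simp only [sub_eq_zero, add_eq_zero_iff_eq_neg]
  split_ifs <;> ring

end Cosine

section Toeplitz

lemma card_filter_fin_sub_eq (N : ℕ) (m : ℤ) :
    ({p | ((p.1 : ℕ) : ℤ) - ((p.2 : ℕ) : ℤ) = m} : Finset (Fin N × Fin N)).card =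
      N - m.natAbs := by
  have hIco : (Finset.Ico m.toNat (N - (-m).toNat)).card = N - m.natAbs := by
    rw [Nat.card_Ico]
    omega
  rw [← hIco]
  refine Finset.card_bij (fun p _ ↦ p.1) ?_ ?_ ?_
  · rintro ⟨i, j⟩ h
    simp only [Finset.mem_filter_univ, Finset.mem_Ico] at h ⊢
    omega
  · rintro ⟨i, j⟩ h ⟨i', j'⟩ h' hi
    simp only [Finset.mem_filter_univ] at h h' hi
    simp only [Prod.mk.injEq, Fin.ext_iff]
    omega
  · intro a ha
    rw [Finset.mem_Ico] at ha
    refine ⟨(⟨a, by omega⟩, ⟨(a - m).toNat, by omega⟩), ?_, rfl⟩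
    simp only [Finset.mem_filter_univ]
    omega

lemma sum_toepN_mul_ite_sub_eq (n : ℕ) (y : ℕ → ℝ) (m : ℤ) :
    ∑ i, ∑ j, toepN n y i j * (if ((i : ℕ) : ℤ) - ((j : ℕ) : ℤ) = m then 1 else 0) =
      (n + 1 - m.natAbs : ℕ) * y m.natAbs := by
  rw [← card_filter_fin_sub_eq, ← nsmul_eq_mul, ← Finset.sum_const, ← Fintype.sum_prod_type']
  rw [Finset.sum_filter]
  refine Finset.sum_congr rfl fun p _ ↦ ?_
  split_ifs with h
  · rw [mul_one, toepN, h]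
  · rw [mul_zero]

lemma toepN_cos_apply (d : ℕ) (t : ℝ) (i j : Fin (d + 1)) :
    toepN d (fun k ↦ cos (k * t)) i j = cos ((((i : ℕ) : ℤ) - ((j : ℕ) : ℤ) : ℤ) * t) := by
  rw [toepN, Nat.cast_natAbs, Int.cast_abs]
  rcases abs_choice ((((i : ℕ) : ℤ) - ((j : ℕ) : ℤ) : ℤ) : ℝ) with h | h <;>
    simp only [h, neg_mul, cos_neg]

lemma toepN_cos_eq_vecMulVec_add_vecMulVec (d : ℕ) (t : ℝ) :
    toepN d (fun k ↦ cos (k * t)) =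
      vecMulVec (fun i : Fin (d + 1) ↦ cos (i.val * t)) (fun j : Fin (d + 1) ↦ cos (j.val * t)) +
        vecMulVec (fun i : Fin (d + 1) ↦ sin (i.val * t))
          (fun j : Fin (d + 1) ↦ sin (j.val * t)) := by
  ext i j
  rw [toepN_cos_apply]
  push_cast
  rw [sub_mul, cos_sub]
  rfl

lemma posSemidef_toepN_cos (d : ℕ) (t : ℝ) : (toepN d fun k ↦ cos (k * t)).PosSemidef := by
  rw [toepN_cos_eq_vecMulVec_add_vecMulVec]
  exact (posSemidef_vecMulVec_self_star _).add (posSemidef_vecMulVec_self_star _)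

lemma posSemidef_toepN_integral_cos (μ : Measure ℝ) [IsFiniteMeasure μ] (d : ℕ) :
    (toepN d fun k ↦ ∫ θ, cos (k * θ) ∂μ).PosSemidef :=
  posSemidef_integral (.of_forall fun θ ↦ posSemidef_toepN_cos d θ)
    fun _ _ ↦ (cosMulBCF _).integrable μ

end Toeplitz

section Fejer

variable (y : ℕ → ℝ) (n : ℕ)

/-- The `n`-th Fejér mean of the cosine series `π⁻¹ (y 0 + 2 ∑ y k cos (k t))`, normalized so that
its moments on `[0, π]` approximate `y`. It is written as a sum over the entries of two Toeplitz
matrices, which after grouping by `|i - j|` is `π⁻¹ (y 0 + 2 ∑ (1 - k / (n + 1)) y k cos (k t))`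
over `1 ≤ k ≤ n`. -/
noncomputable def fejerMean (t : ℝ) : ℝ :=
  (π * (n + 1))⁻¹ * ∑ i, ∑ j, toepN n y i j * toepN n (fun k ↦ cos (k * t)) i j

/-- The measure on `[0, π]` with density `fejerMean y n`. Negative values of the density, which
do not occur when `toepN n y` is positive semidefinite, are truncated to zero. -/
noncomputable def fejerMeasure : Measure ℝ :=
  (volume.restrict (Set.Icc 0 π)).withDensity fun t ↦ ENNReal.ofReal (fejerMean y n t)

lemma continuous_fejerMean : Continuous (fejerMean y n) := by
  unfold fejerMean toepN
  fun_prop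

/-- The truncated subtraction is intended: the moments of order above `n` vanish. -/
lemma integral_fejerMean_mul_cos (k : ℕ) :
    ∫ t in (0 : ℝ)..π, fejerMean y n t * cos (k * t) = (n + 1 - k : ℕ) / (n + 1) * y k := by
  have hterm (i j : Fin (n + 1)) :
      ∫ t in (0 : ℝ)..π, toepN n y i j * (toepN n (fun k ↦ cos (k * t)) i j * cos (k * t)) =
        π / 2 * (toepN n y i j * (if ((i : ℕ) : ℤ) - ((j : ℕ) : ℤ) = k then 1 else 0) +
          toepN n y i j * (if ((i : ℕ) : ℤ) - ((j : ℕ) : ℤ) = -k then 1 else 0)) := by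
    simp only [toepN_cos_apply, intervalIntegral.integral_const_mul]
    rw [← Int.cast_natCast k, integral_cos_int_mul_mul_cos_int_mul]
    ring
  have hint (i j : Fin (n + 1)) : Continuous fun t ↦
      toepN n y i j * (toepN n (fun k ↦ cos (k * t)) i j * cos (k * t)) := by
    simp only [toepN_cos_apply]
    fun_prop
  simp only [fejerMean, mul_assoc, Finset.sum_mul, intervalIntegral.integral_const_mul]
  rw [intervalIntegral.integral_finsetSum fun i _ ↦
    (continuous_finsetSum _ fun j _ ↦ hint i j).intervalIntegrable _ _]
  simp only [intervalIntegral.integral_finsetSum fun j _ ↦ (hint _ j).intervalIntegrable _ _,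
    hterm, ← Finset.mul_sum, Finset.sum_add_distrib, sum_toepN_mul_ite_sub_eq, Int.natAbs_neg,
    Int.natAbs_natCast]
  field_simp
  ring

instance isFiniteMeasure_fejerMeasure : IsFiniteMeasure (fejerMeasure y n) :=
  isFiniteMeasure_withDensity_ofReal
    ((continuous_fejerMean y n).continuousOn.integrableOn_compact isCompact_Icc).2

lemma fejerMeasure_compl_Icc : fejerMeasure y n (Set.Icc 0 π)ᶜ = 0 :=
  withDensity_absolutelyContinuous _ _ (by simp [Measure.restrict_apply measurableSet_Icc.compl])

variable {y n}

lemma fejerMean_nonneg (h : (toepN n y).PosSemidef) (t : ℝ) : 0 ≤ fejerMean y n t :=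
  mul_nonneg (by positivity) (sum_hadamard_nonneg h (posSemidef_toepN_cos n t))

lemma integral_cos_fejerMeasure (h : (toepN n y).PosSemidef) (k : ℕ) :
    ∫ t, cos (k * t) ∂fejerMeasure y n = (n + 1 - k : ℕ) / (n + 1) * y k := by
  rw [fejerMeasure, integral_withDensity_eq_integral_toReal_smul
    (continuous_fejerMean y n).measurable.ennreal_ofReal (by simp)]
  simp only [ENNReal.toReal_ofReal (fejerMean_nonneg h _), smul_eq_mul]
  rw [integral_Icc_eq_integral_Ioc, ← intervalIntegral.integral_of_le pi_pos.le,
    integral_fejerMean_mul_cos]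

lemma fejerMeasure_real_univ (h : (toepN n y).PosSemidef) :
    (fejerMeasure y n).real Set.univ = y 0 := by
  have hn : (n : ℝ) + 1 ≠ 0 := by positivity
  simpa [hn] using integral_cos_fejerMeasure h 0

lemma tendsto_integral_cos_fejerMeasure (h : ∀ d, (toepN d y).PosSemidef) (k : ℕ) :
    Tendsto (fun n ↦ ∫ t, cos (k * t) ∂fejerMeasure y n) atTop (𝓝 (y k)) := by
  have hlim : Tendsto (fun n : ℕ ↦ (1 - k / ((n : ℝ) + 1)) * y k) atTop (𝓝 ((1 - 0) * y k)) :=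
    (tendsto_const_nhds.sub (tendsto_const_nhds.div_atTop
      (tendsto_atTop_add_const_right _ _ tendsto_natCast_atTop_atTop))).mul_const _
  rw [sub_zero, one_mul] at hlim
  refine hlim.congr' ?_
  filter_upwards [eventually_ge_atTop k] with n hn
  rw [integral_cos_fejerMeasure (h n), Nat.cast_sub (by omega)]
  push_cast
  field_simp

end Fejer

/-- Trigonometric moment problem on `[0, π]`: a real sequence `y` is the sequence of
cosine moments `∫_0^π cos(kθ) dμ(θ)` of a finite nonnegative Borel measure `μ` on `[0, π]`
iff all its finite Toeplitz sections `Toep_d(y)` are positive semidefinite. -/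
theorem cosine_moment_problem (y : ℕ → ℝ) :
    (∃ μ : Measure ℝ, IsFiniteMeasure μ ∧ μ (Set.Icc 0 Real.pi)ᶜ = 0 ∧
      ∀ k : ℕ, ∫ θ, Real.cos (k * θ) ∂μ = y k) ↔
    ∀ d : ℕ, (toepN d y).PosSemidef := by
  constructor
  · rintro ⟨μ, _, -, hμ⟩ d
    simpa only [hμ] using posSemidef_toepN_integral_cos μ d
  · intro h
    let ν (n : ℕ) : FiniteMeasure ℝ := ⟨fejerMeasure y n, inferInstance⟩
    have hmass (n : ℕ) : (ν n).mass ≤ (y 0).toNNReal :=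
      NNReal.le_toNNReal_of_coe_le (fejerMeasure_real_univ (h n)).le
    have hsupp (n : ℕ) : ν n (Set.Icc 0 π)ᶜ = 0 :=
      ((ν n).null_iff_toMeasure_null _).2 (fejerMeasure_compl_Icc y n)
    obtain ⟨μ, hμ, hmom⟩ := exists_finiteMeasure_integral_eq_of_tendsto isCompact_Icc hmass hsupp
      (f := fun k : ℕ ↦ cosMulBCF k) (tendsto_integral_cos_fejerMeasure h)
    exact ⟨μ, inferInstance, (μ.null_iff_toMeasure_null _).1 hμ, hmom⟩
end
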